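/- Let π = πₙ be a uniformly distributed random permutation of {1,…,n} and Tₙ = (1/(n²h₁)) Σ_{i=1}^n b̄_{π(i)} L_i. Then there exists a constant c > 0 (depending only on K) such that Var(Tₙ) ≤ c·h₁/n for all sufficiently large n. -/

import Mathlib

open Finset MeasureTheory Filter ProbabilityTheory

/-- The cumulative distribution function `K̄(x) = ∫_{-∞}^x K(t) dt` of the kernel `K`. -/
noncomputable def kbar (K : ℝ → ℝ) (x : ℝ) : ℝ := ∫ t in Set.Iic x, K t

/-- `a_{ij} = (1/h₁) ∫₀¹ K((u - i/n)/h₁) K((u - j/n)/h₁) du` (indices `1 ≤ i, j ≤ n`). -/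
noncomputable def aCoef (K : ℝ → ℝ) (n : ℕ) (h₁ : ℝ) (i j : ℕ) : ℝ :=
  (1 / h₁) * ∫ u in (0:ℝ)..1, K ((u - i / n) / h₁) * K ((u - j / n) / h₁)

/-- `B_{ij} = ∫₀¹ K̄((v - i/n)/h₂) K̄((v - j/n)/h₂) dv` (indices `1 ≤ i, j ≤ n`). -/
noncomputable def BCoef (K : ℝ → ℝ) (n : ℕ) (h₂ : ℝ) (i j : ℕ) : ℝ :=
  ∫ v in (0:ℝ)..1, kbar K ((v - i / n) / h₂) * kbar K ((v - j / n) / h₂)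

/-- `b̄_i = (1/(n-1)) ∑_{k ≠ i} B_{ik}`. -/
noncomputable def bbar (K : ℝ → ℝ) (n : ℕ) (h₂ : ℝ) (i : ℕ) : ℝ :=
  (1 / ((n : ℝ) - 1)) * ∑ k ∈ Finset.Icc 1 n, if k ≠ i then BCoef K n h₂ i k else 0

/-- `L_i = ∑_{j ≠ i} a_{ij}`. -/
noncomputable def LL (K : ℝ → ℝ) (n : ℕ) (h₁ : ℝ) (i : ℕ) : ℝ :=
  ∑ j ∈ Finset.Icc 1 n, if j ≠ i then aCoef K n h₁ i j else 0

/-- `σ₀² = (2/45) ∫₀¹ (1 - ∫_{-t}^1 K(v) K̄(v+t) dv)² dt`. -/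
noncomputable def sigma0sq (K : ℝ → ℝ) : ℝ :=
  (2 / 45) * ∫ t in (0:ℝ)..1, (1 - ∫ v in (-t)..(1:ℝ), K v * kbar K (v + t)) ^ 2

/-- Expectation with respect to a uniformly distributed random permutation of `{1, …, n}`. -/
noncomputable def permE (n : ℕ) (f : Equiv.Perm (Fin n) → ℝ) : ℝ :=
  (∑ π : Equiv.Perm (Fin n), f π) / (Nat.factorial n)

/-!
For centred weights two distinct positions of a random permutation have covariance `-v / (n - 1)`,
where `v` is the variance of the weights; hence Hoeffding's exact formula
`Var (∑ b_{π(i)} l_i) = n² / (n - 1) * Var b * Var l`. The weights `b̄` lie in `[0, 1]`, so their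
variance is at most `1 / 4`. The row sums `L_i` are constant away from the boundary, because there
`a_{ij}` is a function of `i - j` that vanishes for `|i - j| > N ≍ n h₁`. The at most `2 N`
boundary rows deviate by `O(n h₁)`, so `Var L = O(n² h₁³)`, and the prefactor `1 / (n² h₁)` leaves
`O(h₁ / n)`.
-/

/-! ### Variance of permutation statistics -/

section FiniteVariance

open scoped BigOperators

variable {α : Type*} [Fintype α]

/-- The variance of `f a` for `a` uniformly distributed on the finite type `α`. -/
noncomputable def finVariance (f : α → ℝ) : ℝ := 𝔼 a, (f a - 𝔼 b, f b) ^ 2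

lemma finVariance_const_mul (s : ℝ) (f : α → ℝ) :
    finVariance (fun a => s * f a) = s ^ 2 * finVariance f := by
  simp only [finVariance, ← mul_expect, ← mul_sub, mul_pow]

lemma finVariance_nonneg (f : α → ℝ) : 0 ≤ finVariance f :=
  expect_nonneg fun _ _ => sq_nonneg _

variable [Nonempty α]

lemma expect_sub_sq (f : α → ℝ) (c : ℝ) :
    𝔼 a, (f a - c) ^ 2 = finVariance f + (𝔼 a, f a - c) ^ 2 := by
  set m := 𝔼 a, f a with hm
  have hexpand : ∀ a, (f a - c) ^ 2 = (f a - m) ^ 2 + (f a - m) * (2 * (m - c)) + (m - c) ^ 2 :=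
    fun a => by ring
  simp only [hexpand, finVariance, expect_add_distrib, ← expect_mul, expect_sub_distrib,
    Fintype.expect_const, ← hm, sub_self, zero_mul, add_zero]

lemma finVariance_eq_expect_sq_sub (f : α → ℝ) :
    finVariance f = 𝔼 a, f a ^ 2 - (𝔼 a, f a) ^ 2 := by
  simpa using (eq_sub_of_add_eq (expect_sub_sq f 0).symm)

lemma finVariance_le_expect_sub_sq (f : α → ℝ) (c : ℝ) :
    finVariance f ≤ 𝔼 a, (f a - c) ^ 2 := by
  rw [expect_sub_sq]
  exact le_add_of_nonneg_right (sq_nonneg _)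

lemma finVariance_le_of_mem_Icc {f : α → ℝ} {p q : ℝ} (hf : ∀ a, f a ∈ Set.Icc p q) :
    finVariance f ≤ ((q - p) / 2) ^ 2 := by
  refine (finVariance_le_expect_sub_sq f ((p + q) / 2)).trans
    (expect_le univ_nonempty fun a _ => sq_le_sq' ?_ ?_) <;>
  linarith [(hf a).1, (hf a).2]

end FiniteVariance

section Permutation

open scoped BigOperators

variable {ι : Type*} [Fintype ι] [DecidableEq ι]

lemma expect_perm_apply (f : ι → ℝ) (i : ι) : 𝔼 π : Equiv.Perm ι, f (π i) = 𝔼 j, f j := by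
  have : Nonempty ι := ⟨i⟩
  have hindep : ∀ j, 𝔼 π : Equiv.Perm ι, f (π j) = 𝔼 π : Equiv.Perm ι, f (π i) := fun j =>
    Fintype.expect_equiv (Equiv.mulRight (Equiv.swap i j)) _ _ (by simp)
  calc 𝔼 π : Equiv.Perm ι, f (π i) = 𝔼 j, 𝔼 π : Equiv.Perm ι, f (π j) := by
        simp only [hindep, Fintype.expect_const]
    _ = 𝔼 π : Equiv.Perm ι, 𝔼 j, f (π j) := expect_comm _ _ _
    _ = 𝔼 _π : Equiv.Perm ι, 𝔼 j, f j :=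
        expect_congr rfl fun π _ => Fintype.expect_equiv π _ _ fun _ => rfl
    _ = 𝔼 j, f j := Fintype.expect_const _

lemma expect_perm_apply_mul_apply {f : ι → ℝ} (hf : ∑ k, f k = 0) {i j : ι} (hij : j ≠ i) :
    𝔼 π : Equiv.Perm ι, f (π i) * f (π j) = -(𝔼 k, f k ^ 2) / (Fintype.card ι - 1) := by
  have hcard : (1 : ℝ) < Fintype.card ι := by
    exact_mod_cast Fintype.one_lt_card_iff.mpr ⟨j, i, hij⟩
  have hindep : ∀ k ∈ univ.erase i, 𝔼 π : Equiv.Perm ι, f (π i) * f (π k)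
      = 𝔼 π : Equiv.Perm ι, f (π i) * f (π j) := fun k hk =>
    Fintype.expect_equiv (Equiv.mulRight (Equiv.swap j k)) _ _ fun π => by
      simp [Equiv.swap_apply_of_ne_of_ne hij.symm (ne_of_mem_erase hk).symm]
  have htotal : ∑ k, 𝔼 π : Equiv.Perm ι, f (π i) * f (π k) = 0 := by
    rw [← expect_sum_comm]
    exact expect_eq_zero fun π _ => by rw [← mul_sum, Equiv.sum_comp π f, hf, mul_zero]
  rw [← add_sum_erase _ _ (mem_univ i), sum_congr rfl hindep, sum_const,
    card_erase_of_mem (mem_univ i), card_univ, nsmul_eq_mul,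
    Nat.cast_pred (by exact_mod_cast one_pos.trans hcard)] at htotal
  simp only [← pow_two, expect_perm_apply (fun k => f k ^ 2)] at htotal
  rw [eq_div_iff (by linarith)]
  linarith

lemma expect_perm_sum_mul_sq [Nontrivial ι] {f d : ι → ℝ} (hf : ∑ i, f i = 0)
    (hd : ∑ i, d i = 0) :
    𝔼 π : Equiv.Perm ι, (∑ i, f (π i) * d i) ^ 2
      = Fintype.card ι ^ 2 / (Fintype.card ι - 1) * (𝔼 i, f i ^ 2) * 𝔼 i, d i ^ 2 := by
  have hcard : (1 : ℝ) < Fintype.card ι := by exact_mod_cast Fintype.one_lt_card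
  have hm : (Fintype.card ι : ℝ) - 1 ≠ 0 := by linarith
  set v := 𝔼 i, f i ^ 2 with hv
  have hrow : ∀ i, ∑ j, d j * 𝔼 π : Equiv.Perm ι, f (π i) * f (π j)
      = Fintype.card ι / (Fintype.card ι - 1) * v * d i := fun i => by
    have hrest : ∑ j ∈ univ.erase i, d j = -d i := by
      linarith [add_sum_erase univ d (mem_univ i)]
    rw [← add_sum_erase _ _ (mem_univ i), sum_congr rfl fun j hj => by
      rw [expect_perm_apply_mul_apply hf (ne_of_mem_erase hj)], ← sum_mul, hrest, ← hv]
    simp only [← pow_two, expect_perm_apply (fun k => f k ^ 2), ← hv]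
    field_simp
    ring
  calc 𝔼 π : Equiv.Perm ι, (∑ i, f (π i) * d i) ^ 2
      = ∑ i, d i * ∑ j, d j * 𝔼 π : Equiv.Perm ι, f (π i) * f (π j) := by
        simp only [pow_two, sum_mul_sum]
        simp only [expect_sum_comm, mul_sum, mul_expect]
        refine sum_congr rfl fun i _ => sum_congr rfl fun j _ => expect_congr rfl fun π _ => ?_
        ring
    _ = Fintype.card ι / (Fintype.card ι - 1) * v * ∑ i, d i ^ 2 := by
        rw [mul_sum]
        exact sum_congr rfl fun i _ => by rw [hrow]; ring
    _ = Fintype.card ι ^ 2 / (Fintype.card ι - 1) * v * 𝔼 i, d i ^ 2 := by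
        rw [Fintype.expect_eq_sum_div_card]
        field_simp

/-- Hoeffding's formula for the variance of a linear permutation statistic. -/
theorem finVariance_perm_sum_mul [Nontrivial ι] (b l : ι → ℝ) :
    finVariance (fun π : Equiv.Perm ι => ∑ i, b (π i) * l i)
      = Fintype.card ι ^ 2 / (Fintype.card ι - 1) * finVariance b * finVariance l := by
  have hcentred : ∀ g : ι → ℝ, ∑ i, (g i - 𝔼 j, g j) = 0 := fun g => by
    rw [sum_sub_distrib, sum_const, card_univ, Fintype.card_smul_expect, sub_self]
  have hmean : 𝔼 π : Equiv.Perm ι, ∑ i, b (π i) * l i = (𝔼 i, b i) * ∑ i, l i := by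
    simp only [expect_sum_comm, ← expect_mul, expect_perm_apply, ← mul_sum]
  have hcentre : ∀ π : Equiv.Perm ι, ∑ i, b (π i) * l i - (𝔼 i, b i) * ∑ i, l i
      = ∑ i, (b (π i) - 𝔼 j, b j) * (l i - 𝔼 j, l j) := fun π => by
    have hzero : ∑ i, (b (π i) - 𝔼 j, b j) = 0 :=
      (Equiv.sum_comp π fun i => b i - 𝔼 j, b j).trans (hcentred b)
    simp only [mul_sub, sum_sub_distrib, ← sum_mul, hzero, zero_mul, sub_zero]
    simp only [sub_mul, sum_sub_distrib, mul_sum]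
  simp only [finVariance, hmean, hcentre]
  exact expect_perm_sum_mul_sq (f := fun i => b i - 𝔼 j, b j) (hcentred b) (hcentred l)

lemma finVariance_perm_sum_mul_le [Nontrivial ι] {b : ι → ℝ} (hb : ∀ i, b i ∈ Set.Icc (0 : ℝ) 1)
    (l : ι → ℝ) (ℓ : ℝ) :
    finVariance (fun π : Equiv.Perm ι => ∑ i, b (π i) * l i) ≤ (∑ i, (l i - ℓ) ^ 2) / 2 := by
  have hcard : (2 : ℝ) ≤ Fintype.card ι := by exact_mod_cast Fintype.one_lt_card
  have hm : (0 : ℝ) < Fintype.card ι - 1 := by linarith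
  rw [finVariance_perm_sum_mul]
  calc _ ≤ (Fintype.card ι : ℝ) ^ 2 / (Fintype.card ι - 1) * ((1 - 0) / 2) ^ 2
          * 𝔼 i, (l i - ℓ) ^ 2 := by
        gcongr
        exacts [finVariance_nonneg l, finVariance_le_of_mem_Icc hb,
          finVariance_le_expect_sub_sq l ℓ]
    _ = Fintype.card ι / (4 * (Fintype.card ι - 1)) * ∑ i, (l i - ℓ) ^ 2 := by
        rw [Fintype.expect_eq_sum_div_card]
        field_simp
        ring
    _ ≤ 1 / 2 * ∑ i, (l i - ℓ) ^ 2 := by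
        refine mul_le_mul_of_nonneg_right ?_ (sum_nonneg fun _ _ => sq_nonneg _)
        rw [div_le_div_iff₀ (by linarith) two_pos]
        linarith
    _ = (∑ i, (l i - ℓ) ^ 2) / 2 := by ring

lemma permE_eq_expect (n : ℕ) (f : Equiv.Perm (Fin n) → ℝ) : permE n f = 𝔼 π, f π := by
  rw [permE, Fintype.expect_eq_sum_div_card, Fintype.card_perm, Fintype.card_fin]

lemma permE_sq_sub_sq_eq_finVariance (n : ℕ) (f : Equiv.Perm (Fin n) → ℝ) :
    permE n (fun π => f π ^ 2) - permE n f ^ 2 = finVariance f := by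
  rw [permE_eq_expect, permE_eq_expect, finVariance_eq_expect_sq_sub]

end Permutation

/-! ### Row sums of banded arrays -/

section BandedArray

/-- The off-diagonal row sum `∑_{j ≠ i} a i j`, for indices `1 ≤ j ≤ n`. -/
noncomputable def offDiagSum (a : ℕ → ℕ → ℝ) (n i : ℕ) : ℝ := ∑ j ∈ (Icc 1 n).erase i, a i j

lemma LL_eq_offDiagSum (K : ℝ → ℝ) (n : ℕ) (h : ℝ) (i : ℕ) :
    LL K n h i = offDiagSum (aCoef K n h) n i := by
  rw [LL, offDiagSum, ← sum_filter, filter_ne']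

lemma bbar_eq_offDiagSum_div (K : ℝ → ℝ) (n : ℕ) (h : ℝ) (i : ℕ) :
    bbar K n h i = offDiagSum (BCoef K n h) n i / (n - 1) := by
  rw [bbar, offDiagSum, ← sum_filter, filter_ne', one_div_mul_eq_div]

lemma sum_le_card_mul_of_eq_zero {α : Type*} {s t : Finset α} {f : α → ℝ} {D : ℝ}
    (hD : 0 ≤ D) (hf : ∀ x ∈ s, f x ≤ D) (hzero : ∀ x ∈ s, x ∉ t → f x = 0) :
    ∑ x ∈ s, f x ≤ #t * D := by
  classical
  calc ∑ x ∈ s, f x = ∑ x ∈ s ∩ t, f x :=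
        (sum_subset inter_subset_left fun x hs hst =>
          hzero x hs fun ht => hst (mem_inter.mpr ⟨hs, ht⟩)).symm
    _ ≤ #(s ∩ t) * D := by
        rw [← nsmul_eq_mul]
        exact sum_le_card_nsmul _ _ _ fun x hx => hf x (mem_of_mem_inter_left hx)
    _ ≤ #t * D := by
        gcongr
        exact inter_subset_right

variable {a : ℕ → ℕ → ℝ} {n N : ℕ} {A : ℝ}

lemma offDiagSum_nonneg (ha : ∀ i j, 0 ≤ a i j) (n i : ℕ) : 0 ≤ offDiagSum a n i :=
  sum_nonneg fun _ _ => ha _ _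

lemma offDiagSum_le (hA : ∀ i j, a i j ≤ A) {i : ℕ} (hi : i ∈ Icc 1 n) :
    offDiagSum a n i ≤ (n - 1) * A := by
  have hcard : ((#((Icc 1 n).erase i) : ℕ) : ℝ) = n - 1 := by
    have hin := mem_Icc.mp hi
    rw [card_erase_of_mem hi, Nat.card_Icc, Nat.add_sub_cancel, Nat.cast_pred (by omega)]
  rw [← hcard, ← nsmul_eq_mul]
  exact sum_le_card_nsmul _ _ _ fun j _ => hA i j

lemma offDiagSum_le_of_banded (ha : ∀ i j, 0 ≤ a i j) (hA : ∀ i j, a i j ≤ A)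
    (hband : ∀ i j : ℕ, (N : ℤ) < |(i : ℤ) - j| → a i j = 0) (n i : ℕ) :
    offDiagSum a n i ≤ 2 * N * A := by
  have hA0 : 0 ≤ A := (ha 0 0).trans (hA 0 0)
  have hsum : offDiagSum a n i ≤ #((Icc (i - N) (i + N)).erase i) * A := by
    refine sum_le_card_mul_of_eq_zero hA0 (fun j _ => hA i j) fun j hj hnot => hband i j ?_
    rw [mem_erase, mem_Icc] at hnot
    rw [lt_abs]
    have := ne_of_mem_erase hj
    omega
  have hcard : #((Icc (i - N) (i + N)).erase i) ≤ 2 * N := by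
    rw [card_erase_of_mem (mem_Icc.mpr ⟨by omega, by omega⟩), Nat.card_Icc]
    omega
  refine hsum.trans ?_
  gcongr
  exact_mod_cast hcard

lemma offDiagSum_eq_sum_of_banded {g : ℤ → ℝ} {i : ℕ}
    (hband : ∀ j : ℕ, (N : ℤ) < |(i : ℤ) - j| → a i j = 0)
    (hg : ∀ j : ℕ, a i j = g (i - j)) (hlo : N < i) (hhi : i + N ≤ n) :
    offDiagSum a n i = ∑ k ∈ (Icc (-N : ℤ) N).erase 0, g k := by
  have hsub : (Icc (i - N) (i + N)).erase i ⊆ (Icc 1 n).erase i := by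
    refine erase_subset_erase i (Icc_subset_Icc ?_ hhi)
    omega
  rw [offDiagSum, ← sum_subset hsub fun j hj hnot => ?_]
  · refine sum_nbij' (fun j => (i : ℤ) - j) (fun k => (i - k).toNat) ?_ ?_ ?_ ?_ fun j _ => hg j
    all_goals
      intro j hj
      simp only [mem_erase, mem_Icc] at hj ⊢
      omega
  · rw [mem_erase, mem_Icc] at hnot
    refine hband j ?_
    rw [lt_abs]
    have := ne_of_mem_erase hj
    omega

lemma exists_sum_offDiagSum_sub_sq_le (ha : ∀ i j, 0 ≤ a i j) (hA : ∀ i j, a i j ≤ A)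
    (hband : ∀ i j : ℕ, (N : ℤ) < |(i : ℤ) - j| → a i j = 0) {g : ℤ → ℝ}
    (hg : ∀ i j : ℕ, N < i → i + N ≤ n → a i j = g (i - j)) :
    ∃ ℓ, ∑ i : Fin n, (offDiagSum a n (i + 1) - ℓ) ^ 2 ≤ 2 * N * (2 * N * A) ^ 2 := by
  -- Row `N + 1` is interior as soon as some row is; otherwise all rows are boundary rows.
  set ℓ := offDiagSum a n (N + 1) with hℓ
  have hinterior : ∀ i ∈ range n, i ∉ range N ∪ Ico (n - N) n →
      (offDiagSum a n (i + 1) - ℓ) ^ 2 = 0 := fun i hi hnot => by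
    rw [mem_range] at hi
    rw [mem_union, mem_range, mem_Ico] at hnot
    have hrow : ∀ r, N < r → r + N ≤ n →
        offDiagSum a n r = ∑ k ∈ (Icc (-N : ℤ) N).erase 0, g k := fun r hlo hhi =>
      offDiagSum_eq_sum_of_banded (hband r) (fun j => hg r j hlo hhi) hlo hhi
    rw [hℓ, hrow (i + 1) (by omega) (by omega), hrow (N + 1) (by omega) (by omega), sub_self,
      zero_pow two_ne_zero]
  have hbound : ∀ i ∈ range n, (offDiagSum a n (i + 1) - ℓ) ^ 2 ≤ (2 * N * A) ^ 2 := fun i _ => by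
    have hi0 := offDiagSum_nonneg ha n (i + 1)
    have hi1 := offDiagSum_le_of_banded ha hA hband n (i + 1)
    have hℓ0 := offDiagSum_nonneg ha n (N + 1)
    have hℓ1 := offDiagSum_le_of_banded ha hA hband n (N + 1)
    exact sq_le_sq' (by linarith) (by linarith)
  have hcard : #(range N ∪ Ico (n - N) n) ≤ 2 * N := by
    refine (card_union_le _ _).trans ?_
    rw [card_range, Nat.card_Ico]
    omega
  refine ⟨ℓ, ?_⟩
  rw [Fin.sum_univ_eq_sum_range (fun i => (offDiagSum a n (i + 1) - ℓ) ^ 2) n]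
  refine (sum_le_card_mul_of_eq_zero (sq_nonneg _) hbound hinterior).trans ?_
  gcongr
  exact_mod_cast hcard

end BandedArray

/-! ### Kernel coefficients -/

section Kernel

variable {K : ℝ → ℝ} {M R h : ℝ} {n : ℕ}

lemma kbar_mem_Icc (hK : ∀ x, 0 ≤ K x) (hKint : ∫ x, K x = 1) (x : ℝ) :
    kbar K x ∈ Set.Icc (0 : ℝ) 1 :=
  ⟨integral_nonneg hK, (setIntegral_le_integral (integrable_of_integral_eq_one hKint)
    (ae_of_all _ hK)).trans_eq hKint⟩

lemma BCoef_nonneg (hK : ∀ x, 0 ≤ K x) (n : ℕ) (h : ℝ) (i j : ℕ) : 0 ≤ BCoef K n h i j :=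
  intervalIntegral.integral_nonneg zero_le_one fun _ _ =>
    mul_nonneg (integral_nonneg hK) (integral_nonneg hK)

lemma BCoef_le_one (hK : ∀ x, 0 ≤ K x) (hKint : ∫ x, K x = 1) (n : ℕ) (h : ℝ) (i j : ℕ) :
    BCoef K n h i j ≤ 1 := by
  have hkbar := kbar_mem_Icc hK hKint
  have hbound : ‖BCoef K n h i j‖ ≤ 1 * |(1 : ℝ) - 0| :=
    intervalIntegral.norm_integral_le_of_norm_le_const fun v _ => by
      rw [Real.norm_of_nonneg (mul_nonneg (hkbar _).1 (hkbar _).1)]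
      exact mul_le_one₀ (hkbar _).2 (hkbar _).1 (hkbar _).2
  simpa using (le_abs_self _).trans hbound

lemma bbar_mem_Icc (hK : ∀ x, 0 ≤ K x) (hKint : ∫ x, K x = 1) (hn : 2 ≤ n) (h : ℝ) {i : ℕ}
    (hi : i ∈ Icc 1 n) : bbar K n h i ∈ Set.Icc (0 : ℝ) 1 := by
  have hn' : (0 : ℝ) < n - 1 := by
    have : (2 : ℝ) ≤ n := by exact_mod_cast hn
    linarith
  rw [bbar_eq_offDiagSum_div]
  refine ⟨div_nonneg (offDiagSum_nonneg (BCoef_nonneg hK n h) n i) hn'.le, ?_⟩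
  rw [div_le_one hn', ← mul_one ((n : ℝ) - 1)]
  exact offDiagSum_le (BCoef_le_one hK hKint n h) hi

/-- The autocorrelation `d ↦ ∫ K(w) K(w + d) dw` of the kernel. Away from the boundary, `a_{ij}` is
its value at `(i - j) / (n h₁)`. -/
noncomputable def autocorr (K : ℝ → ℝ) (d : ℝ) : ℝ := ∫ w, K w * K (w + d)

lemma autocorr_le (hK : ∀ x, 0 ≤ K x) (hKint : ∫ x, K x = 1) (hM : ∀ x, K x ≤ M) (d : ℝ) :
    autocorr K d ≤ M := by
  calc autocorr K d ≤ ∫ w, K w * M :=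
        integral_mono_of_nonneg (ae_of_all _ fun _ => mul_nonneg (hK _) (hK _))
          ((integrable_of_integral_eq_one hKint).mul_const M)
          (ae_of_all _ fun w => mul_le_mul_of_nonneg_left (hM _) (hK w))
    _ = M := by rw [integral_mul_const, hKint, one_mul]

lemma integral_comp_sub_div_mul_comp_sub_div (K : ℝ → ℝ) (hh : 0 < h) (x y : ℝ) :
    ∫ u, K ((u - x) / h) * K ((u - y) / h) = h * autocorr K ((x - y) / h) := by
  have hshift : ∀ u, K ((u - x) / h) * K ((u - y) / h)
      = (fun w => K (w / h) * K (w / h + (x - y) / h)) (u - x) := fun u => by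
    rw [show (u - y) / h = (u - x) / h + (x - y) / h by ring]
  rw [integral_congr_ae (ae_of_all _ hshift),
    integral_sub_right_eq_self (fun w => K (w / h) * K (w / h + (x - y) / h)) x,
    Measure.integral_comp_div (fun w => K w * K (w + (x - y) / h)), abs_of_pos hh, smul_eq_mul,
    autocorr]

lemma aCoef_nonneg (hK : ∀ x, 0 ≤ K x) (n : ℕ) (hh : 0 < h) (i j : ℕ) : 0 ≤ aCoef K n h i j :=
  mul_nonneg (one_div_nonneg.mpr hh.le)
    (intervalIntegral.integral_nonneg zero_le_one fun _ _ => mul_nonneg (hK _) (hK _))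

lemma aCoef_le (hK : ∀ x, 0 ≤ K x) (hKint : ∫ x, K x = 1) (hM : ∀ x, K x ≤ M) (n : ℕ)
    (hh : 0 < h) (i j : ℕ) : aCoef K n h i j ≤ M := by
  have hcomp : ∀ x : ℝ, Integrable fun u => K ((u - x) / h) := fun x =>
    ((integrable_of_integral_eq_one hKint).comp_div hh.ne').comp_sub_right x
  have hint : Integrable fun u : ℝ => K ((u - i / n) / h) * K ((u - j / n) / h) :=
    (hcomp _).bdd_mul (c := M) (hcomp _).aestronglyMeasurable
      (ae_of_all _ fun u => (Real.norm_of_nonneg (hK _)).trans_le (hM _))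
  rw [aCoef, intervalIntegral.integral_of_le zero_le_one, one_div, inv_mul_le_iff₀ hh]
  calc ∫ u in Set.Ioc (0 : ℝ) 1, K ((u - i / n) / h) * K ((u - j / n) / h)
      ≤ ∫ u, K ((u - i / n) / h) * K ((u - j / n) / h) :=
        setIntegral_le_integral hint (ae_of_all _ fun _ => mul_nonneg (hK _) (hK _))
    _ = h * autocorr K ((i / n - j / n) / h) := integral_comp_sub_div_mul_comp_sub_div K hh _ _
    _ ≤ h * M := mul_le_mul_of_nonneg_left (autocorr_le hK hKint hM _) hh.le

lemma aCoef_eq_zero (hKsupp : ∀ x, R < |x| → K x = 0) (hn : 0 < n) (hh : 0 < h) {i j : ℕ}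
    (hij : 2 * (R * (n * h)) < |(i : ℝ) - j|) : aCoef K n h i j = 0 := by
  have hnh : 0 < (n : ℝ) * h := mul_pos (Nat.cast_pos.mpr hn) hh
  have hzero : ∀ u : ℝ, K ((u - i / n) / h) * K ((u - j / n) / h) = 0 := fun u => by
    by_contra hne
    have hi : |(u - i / n) / h| ≤ R :=
      le_of_not_gt fun hlt => left_ne_zero_of_mul hne (hKsupp _ hlt)
    have hj : |(u - j / n) / h| ≤ R :=
      le_of_not_gt fun hlt => right_ne_zero_of_mul hne (hKsupp _ hlt)
    have hdiff : (i : ℝ) - j = n * h * ((u - j / n) / h - (u - i / n) / h) := by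
      field_simp
      ring
    have hclose : |(u - j / n) / h - (u - i / n) / h| ≤ 2 * R := by
      linarith [abs_sub ((u - j / n) / h) ((u - i / n) / h)]
    rw [hdiff, abs_mul, abs_of_pos hnh] at hij
    linarith [mul_le_mul_of_nonneg_left hclose hnh.le]
  simp [aCoef, hzero]

lemma aCoef_eq_autocorr (hKsupp : ∀ x, R < |x| → K x = 0) (hn : 0 < n) (hh : 0 < h) {i : ℕ}
    (j : ℕ) (hlo : R * (n * h) < i) (hhi : i + R * (n * h) ≤ n) :
    aCoef K n h i j = autocorr K ((i - j) / (n * h)) := by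
  have hn' : (0 : ℝ) < n := Nat.cast_pos.mpr hn
  have hzero : ∀ u : ℝ, u ∉ Set.Ioc (0 : ℝ) 1 →
      K ((u - i / n) / h) * K ((u - j / n) / h) = 0 := fun u hu => by
    refine mul_eq_zero_of_left (hKsupp _ (lt_of_not_ge fun hle => hu ?_)) _
    rw [abs_le, le_div_iff₀ hh, div_le_iff₀ hh] at hle
    have hleft : R * h < i / n := by
      rw [lt_div_iff₀ hn']
      linarith
    have hright : (i : ℝ) / n ≤ 1 - R * h := by
      rw [div_le_iff₀ hn']
      linarith
    exact ⟨by linarith, by linarith⟩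
  rw [aCoef, intervalIntegral.integral_of_le zero_le_one,
    setIntegral_eq_integral_of_forall_compl_eq_zero hzero,
    integral_comp_sub_div_mul_comp_sub_div K hh, ← sub_div, div_div]
  field_simp

lemma exists_sum_LL_sub_sq_le (hK : ∀ x, 0 ≤ K x) (hKint : ∫ x, K x = 1) (hM : ∀ x, K x ≤ M)
    (hKsupp : ∀ x, R < |x| → K x = 0) (hn : 0 < n) (hh : 0 < h) {N : ℕ}
    (hN : 2 * (R * (n * h)) ≤ N) :
    ∃ ℓ, ∑ i : Fin n, (LL K n h (i + 1) - ℓ) ^ 2 ≤ 2 * N * (2 * N * M) ^ 2 := by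
  have hband : ∀ i j : ℕ, (N : ℤ) < |(i : ℤ) - j| → aCoef K n h i j = 0 := fun i j hij =>
    aCoef_eq_zero hKsupp hn hh (hN.trans_lt (by exact_mod_cast hij))
  have htoeplitz : ∀ i j : ℕ, N < i → i + N ≤ n →
      aCoef K n h i j = autocorr K (((i - j : ℤ) : ℝ) / (n * h)) := fun i j hlo hhi => by
    have hlo' : (N : ℝ) < i := by exact_mod_cast hlo
    have hhi' : (i : ℝ) + N ≤ n := by exact_mod_cast hhi
    rw [aCoef_eq_autocorr hKsupp hn hh j (by linarith) (by linarith)]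
    push_cast
    rfl
  simp only [LL_eq_offDiagSum]
  exact exists_sum_offDiagSum_sub_sq_le (g := fun k => autocorr K (k / (n * h)))
    (aCoef_nonneg hK n hh) (aCoef_le hK hKint hM n hh) hband htoeplitz

/-- The statistic `Tₙ = (1/(n²h₁)) ∑ᵢ b̄_{π(i)} Lᵢ`. As `Fin n` counts from `0`, the indices are
shifted by one. -/
noncomputable def permStat (K : ℝ → ℝ) (n : ℕ) (h₁ h₂ : ℝ) (π : Equiv.Perm (Fin n)) : ℝ :=
  1 / ((n : ℝ) ^ 2 * h₁) * ∑ i : Fin n, bbar K n h₂ ((π i : ℕ) + 1) * LL K n h₁ ((i : ℕ) + 1)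

lemma finVariance_permStat_le (hK : ∀ x, 0 ≤ K x) (hKint : ∫ x, K x = 1) (hM : ∀ x, K x ≤ M)
    (hR : 0 ≤ R) (hKsupp : ∀ x, R < |x| → K x = 0) (hn : 2 ≤ n) {h₁ : ℝ} (hnh : 1 ≤ n * h₁)
    (h₂ : ℝ) : finVariance (permStat K n h₁ h₂) ≤ 4 * (2 * R + 1) ^ 3 * M ^ 2 * h₁ / n := by
  have hn0 : (0 : ℝ) < n := by exact_mod_cast two_pos.trans_le hn
  have hh₁ : 0 < h₁ := pos_of_mul_pos_right (one_pos.trans_le hnh) hn0.le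
  have : Nontrivial (Fin n) := Fin.nontrivial_iff_two_le.mpr hn
  set N := ⌈2 * (R * (n * h₁))⌉₊
  have hN : (N : ℝ) ≤ (2 * R + 1) * (n * h₁) := by
    linarith [Nat.ceil_lt_add_one (a := 2 * (R * (n * h₁))) (by positivity)]
  have hbbar : ∀ i : Fin n, bbar K n h₂ (i + 1) ∈ Set.Icc (0 : ℝ) 1 := fun i =>
    bbar_mem_Icc hK hKint hn h₂ (mem_Icc.mpr ⟨by omega, by omega⟩)
  obtain ⟨ℓ, hℓ⟩ := exists_sum_LL_sub_sq_le hK hKint hM hKsupp (two_pos.trans_le hn) hh₁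
    (Nat.le_ceil _)
  set s : ℝ := 1 / ((n : ℝ) ^ 2 * h₁) with hs
  calc finVariance (permStat K n h₁ h₂)
      = s ^ 2 * finVariance fun π : Equiv.Perm (Fin n) =>
          ∑ i, bbar K n h₂ ((π i : ℕ) + 1) * LL K n h₁ (i + 1) := finVariance_const_mul _ _
    _ ≤ s ^ 2 * ((∑ i : Fin n, (LL K n h₁ (i + 1) - ℓ) ^ 2) / 2) := by
        gcongr
        exact finVariance_perm_sum_mul_le hbbar _ ℓ
    _ ≤ s ^ 2 * (2 * N * (2 * N * M) ^ 2 / 2) := by gcongr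
    _ = s ^ 2 * (4 * M ^ 2 * N ^ 3) := by ring
    _ ≤ s ^ 2 * (4 * M ^ 2 * ((2 * R + 1) * (n * h₁)) ^ 3) := by gcongr
    _ = 4 * (2 * R + 1) ^ 3 * M ^ 2 * h₁ / n := by
        rw [hs]
        field_simp

theorem stmt9_general (hK : ∀ x, 0 ≤ K x) (hKint : ∫ x, K x = 1)
    (hKbdd : BddAbove (Set.range K)) (hKsupp : HasCompactSupport K) :
    ∃ c > 0, ∀ (n : ℕ) (h₁ h₂ : ℝ), 2 ≤ n → 1 ≤ n * h₁ → 0 < h₂ →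
      permE n (fun π => permStat K n h₁ h₂ π ^ 2) - permE n (permStat K n h₁ h₂) ^ 2
        ≤ c * h₁ / n := by
  obtain ⟨M, hM1, hM⟩ := hKbdd.exists_ge 1
  obtain ⟨R, hR, hball⟩ := hKsupp.isCompact.isBounded.subset_closedBall_lt 0 0
  have hsupp : ∀ x, R < |x| → K x = 0 := fun x hx =>
    image_eq_zero_of_notMem_tsupport fun hmem => by
      simpa [hx.not_ge] using hball hmem
  refine ⟨4 * (2 * R + 1) ^ 3 * M ^ 2, by positivity, fun n h₁ h₂ hn hnh _ => ?_⟩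
  rw [permE_sq_sub_sq_eq_finVariance]
  exact finVariance_permStat_le hK hKint (Set.forall_mem_range.mp hM) hR.le hsupp hn hnh h₂

end Kernel

/-- for `Tₙ = (1/(n²h₁)) ∑ᵢ b̄_{π(i)} Lᵢ` with a uniform random permutation `π`,
`Var(Tₙ) ≤ c h₁/n` for all sufficiently large `n`, where `c > 0` depends only on `K`. -/
theorem stmt9 (K : ℝ → ℝ)
    (hKcont : Continuous K) (hKsymm : ∀ x, K (-x) = K x)
    (hKnonneg : ∀ x, 0 ≤ K x) (hKint : ∫ x, K x = 1)
    (hKsupp : ∀ x, x ∉ Set.Icc (-1 : ℝ) 1 → K x = 0)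
    (h₁ h₂ : ℕ → ℝ) (hh₁pos : ∀ n, 0 < h₁ n) (hh₂pos : ∀ n, 0 < h₂ n)
    (hh₁0 : Tendsto h₁ atTop (nhds 0)) (hh₂0 : Tendsto h₂ atTop (nhds 0))
    (hnh₁ : Tendsto (fun n : ℕ => (n : ℝ) * h₁ n) atTop atTop)
    (hh₂le : ∀ n, h₂ n ≤ 1)
    (T : ∀ n : ℕ, Equiv.Perm (Fin n) → ℝ)
    (hT : ∀ n π, T n π = (1 / ((n : ℝ) ^ 2 * h₁ n)) *
      ∑ i : Fin n, bbar K n (h₂ n) ((π i : ℕ) + 1) * LL K n (h₁ n) ((i : ℕ) + 1)) :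
    ∃ c > 0, ∀ᶠ n : ℕ in atTop,
      permE n (fun π => (T n π) ^ 2) - (permE n (T n)) ^ 2 ≤ c * h₁ n / n := by
  obtain ⟨c, hc, hvar⟩ := stmt9_general hKnonneg hKint
    (hKcont.bddAbove_range_of_hasCompactSupport (.intro isCompact_Icc hKsupp))
    (.intro isCompact_Icc hKsupp)
  refine ⟨c, hc, ?_⟩
  filter_upwards [hnh₁.eventually_ge_atTop 1, eventually_ge_atTop 2] with n hnh hn
  rw [show T n = permStat K n (h₁ n) (h₂ n) from funext (hT n)]
  exact hvar n (h₁ n) (h₂ n) hn hnh (hh₂pos n)
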